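/- arXiv:2212.07198 — 2 statements merged into one kernel-verified Lean document; each statement's English description precedes it below -/
import Mathlib

section
/- Let a be a positive integer and p an odd prime number. Then a appears an odd number of times among the partial quotients a₁, …, a_{T_{2p}} of the period of the continued fraction of √(2p) if and only if a is even and either a² < 8p < (a+2)², or both a² < 2p < (a+2)² and T_{2p} is even. -/
/-- The sequence of complete quotients of the continued fraction of `x`:
`α₀ = x`, `α_{k+1} = 1/(αₖ - ⌊αₖ⌋)`. -/
noncomputable def cfAlpha (x : ℝ) : ℕ → ℝ
  | 0 => x
  | k + 1 => 1 / (cfAlpha x k - (⌊cfAlpha x k⌋ : ℝ))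

/-- The partial quotients of the continued fraction of `x`: `aₖ = ⌊αₖ⌋`. -/
noncomputable def cfA (x : ℝ) (k : ℕ) : ℤ :=
  ⌊cfAlpha x k⌋

/-- The length of the minimal period of the continued fraction of `x`:
the least `l > 0` with `a_{k+l} = a_k` for all `k ≥ 1`. -/
noncomputable def cfPeriod (x : ℝ) : ℕ :=
  sInf {l : ℕ | 0 < l ∧ ∀ k : ℕ, 1 ≤ k → cfA x (k + l) = cfA x k}

/-! The complete quotients of `√D` run through the reduced surds `(P + √D) / Q`, which the continued
fraction step permutes. Writing `α'` for the conjugate of `α`, the map `α ↦ ⌊α⌋ - α'` is an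
involution on reduced surds which preserves `⌊α⌋`, conjugates the step to its inverse and fixes
`⌊√D⌋ + √D`. It therefore reverses the cycle of `⌊√D⌋ + √D`, so `a_{T-k} = a_k`, and the parity of
the number of occurrences of a partial quotient is decided by `a_T = 2⌊√D⌋` and, for even `T`, by
the central `a_{T/2}`. The central surd is fixed by the involution, that is `2P = a_{T/2} Q`; for
`D = 2p` the equation `P² + QQ' = 2p` then leaves only `Q = 2`, so `a_{T/2} = P` is the even number
with `P² < 2p < (P + 2)²`. -/

open Finset

section Counting

theorem odd_card_iff_odd_card_filter_fixed {α : Type*} [DecidableEq α] {s : Finset α} {σ : α → α}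
    (hmem : ∀ k ∈ s, σ k ∈ s) (hinv : ∀ k ∈ s, σ (σ k) = k) :
    Odd #s ↔ Odd #{k ∈ s | σ k = k} := by
  have moved_even : Even #{k ∈ s | σ k ≠ k} := by
    rw [← ZMod.natCast_eq_zero_iff_even, card_eq_sum_ones, Nat.cast_sum]
    refine sum_involution (fun k _ ↦ σ k) (fun _ _ ↦ by decide) (fun k hk _ ↦ (mem_filter.mp hk).2)
      (fun k hk ↦ ?_) (fun k hk ↦ hinv k (mem_filter.mp hk).1)
    obtain ⟨hks, hne⟩ := mem_filter.mp hk
    exact mem_filter.mpr ⟨hmem k hks, by rw [hinv k hks]; exact hne.symm⟩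
  rw [← card_filter_add_card_filter_not (s := s) (fun k ↦ σ k = k), Nat.odd_add]
  exact iff_true_right moved_even

variable {n : ℕ} {f : ℕ → Prop} [DecidablePred f]

theorem odd_card_filter_Ioo_iff_of_symm (hn : 0 < n)
    (hf : ∀ k, 0 < k → k < n → f k → f (n - k)) :
    Odd #{k ∈ Ioo 0 n | f k} ↔ Even n ∧ f (n / 2) := by
  rw [odd_card_iff_odd_card_filter_fixed (σ := fun k ↦ n - k)]
  · have fixed_eq : {k ∈ {k ∈ Ioo 0 n | f k} | n - k = k} =
        if Even n ∧ f (n / 2) then {n / 2} else ∅ := by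
      split_ifs with h
      all_goals
        ext k
        simp only [mem_filter, mem_Ioo, mem_singleton, notMem_empty]
        grind
    rw [fixed_eq]
    split_ifs with h <;> simp [h]
  · simp only [mem_filter, mem_Ioo]
    exact fun k ⟨⟨h0, hlt⟩, hk⟩ ↦ ⟨by omega, hf k h0 hlt hk⟩
  · simp only [mem_filter, mem_Ioo]
    omega

theorem odd_card_filter_Icc_iff_of_symm (hn : 0 < n)
    (hf : ∀ k, 0 < k → k < n → f k → f (n - k)) :
    Odd #{k ∈ Icc 1 n | f k} ↔ Xor (f n) (Even n ∧ f (n / 2)) := by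
  have insert_last : Icc 1 n = insert n (Ioo 0 n) := by
    rw [Ioo_insert_right hn]
    rfl
  rw [insert_last, filter_insert, ← odd_card_filter_Ioo_iff_of_symm hn hf]
  split_ifs with h
  · rw [card_insert_of_notMem (by simp), Nat.odd_add_one]
    simp [h, Xor]
  · simp [h, Xor]

end Counting

theorem eq_iff_even_and_sq_lt_and_lt_add_two_sq {a c N : ℤ} (ha : 0 ≤ a) (hc : 0 ≤ c)
    (hceven : Even c) (hlt : c ^ 2 < N) (hgt : N < (c + 2) ^ 2) :
    c = a ↔ Even a ∧ a ^ 2 < N ∧ N < (a + 2) ^ 2 := by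
  constructor
  · rintro rfl
    exact ⟨hceven, hlt, hgt⟩
  · rintro ⟨haeven, hlt', hgt'⟩
    have hac : a < c + 2 := lt_of_pow_lt_pow_left₀ 2 (by positivity) (hlt'.trans hgt)
    have hca : c < a + 2 := lt_of_pow_lt_pow_left₀ 2 (by positivity) (hlt.trans hgt')
    obtain ⟨b, rfl⟩ := haeven
    obtain ⟨d, rfl⟩ := hceven
    omega

theorem cast_nat_sqrt_sq_lt (D : ℕ) [Zsqrtd.Nonsquare D] : (D.sqrt : ℤ) ^ 2 < D := by
  have hne : D.sqrt ^ 2 ≠ D := fun h ↦ Zsqrtd.Nonsquare.ns D D.sqrt (by rw [← sq, h])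
  exact_mod_cast (Nat.sqrt_le' D).lt_of_ne hne

theorem lt_cast_nat_sqrt_add_one_sq (D : ℕ) : (D : ℤ) < (D.sqrt + 1) ^ 2 := by
  exact_mod_cast Nat.lt_succ_sqrt' D

theorem two_mul_nat_sqrt_eq_iff {D a : ℕ} [Zsqrtd.Nonsquare D] :
    2 * D.sqrt = a ↔ Even a ∧ a ^ 2 < 4 * D ∧ 4 * D < (a + 2) ^ 2 := by
  have hlt := cast_nat_sqrt_sq_lt D
  have hgt := lt_cast_nat_sqrt_add_one_sq D
  have cast_iff := eq_iff_even_and_sq_lt_and_lt_add_two_sq (a := a) (c := 2 * D.sqrt) (N := 4 * D)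
    (by positivity) (by positivity) (even_two_mul _) (by linarith) (by linarith)
  exact_mod_cast cast_iff

/-- A reduced quadratic surd `α = (num + √D) / den`, that is `1 < α` and `-1 < α' < 0` for the
conjugate `α'`. The third entry is the complementary factor in `num² + den * prevDen = D`; along
the continued fraction of `√D` it is the denominator of the preceding complete quotient. In terms
of these integers being reduced means that both `num + den` and `num + prevDen` exceed `√D`. -/
@[ext] structure ReducedSurd (D : ℕ) where
  num : ℤ
  den : ℤ
  prevDen : ℤ
  den_pos : 0 < den
  prevDen_pos : 0 < prevDen
  sqrt_lt_num_add_den : (D.sqrt : ℤ) < num + den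
  sqrt_lt_num_add_prevDen : (D.sqrt : ℤ) < num + prevDen
  num_sq_add_den_mul_prevDen : num ^ 2 + den * prevDen = D

namespace ReducedSurd

variable {D : ℕ}

section Step

variable (s : ReducedSurd D)

theorem num_sq_lt : s.num ^ 2 < D := by
  linarith [s.num_sq_add_den_mul_prevDen, mul_pos s.den_pos s.prevDen_pos]

theorem num_le_sqrt : s.num ≤ D.sqrt :=
  Int.lt_add_one_iff.mp <| lt_of_pow_lt_pow_left₀ 2 (by positivity) <|
    s.num_sq_lt.trans (lt_cast_nat_sqrt_add_one_sq D)

theorem num_pos : 0 < s.num := by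
  by_contra! hnum
  have hprod : (D.sqrt + 1 - s.num) * (D.sqrt + 1 - s.num) ≤ s.den * s.prevDen :=
    mul_le_mul (by linarith [s.sqrt_lt_num_add_den]) (by linarith [s.sqrt_lt_num_add_prevDen])
      (by linarith) s.den_pos.le
  nlinarith [s.num_sq_add_den_mul_prevDen, lt_cast_nat_sqrt_add_one_sq D]

theorem lt_num_add_den_sq : (D : ℤ) < (s.num + s.den) ^ 2 :=
  (lt_cast_nat_sqrt_add_one_sq D).trans_le <|
    pow_le_pow_left₀ (by positivity) (Int.add_one_le_iff.mpr s.sqrt_lt_num_add_den) 2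

theorem den_le_num_add_sqrt : s.den ≤ s.num + D.sqrt := by
  by_contra! hden
  have hprod : (D.sqrt + 1 + s.num) * (D.sqrt + 1 - s.num) ≤ s.den * s.prevDen :=
    mul_le_mul (by linarith) (by linarith [s.sqrt_lt_num_add_prevDen])
      (by linarith [s.num_le_sqrt]) s.den_pos.le
  linarith [s.num_sq_add_den_mul_prevDen, lt_cast_nat_sqrt_add_one_sq D,
    show (D.sqrt + 1 + s.num) * (D.sqrt + 1 - s.num) = (D.sqrt + 1 : ℤ) ^ 2 - s.num ^ 2 by ring]

theorem eq_of_num_eq_of_den_eq {s t : ReducedSurd D} (hnum : s.num = t.num) (hden : s.den = t.den) :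
    s = t := by
  refine ReducedSurd.ext hnum hden (mul_left_cancel₀ s.den_pos.ne' ?_)
  have hs := s.num_sq_add_den_mul_prevDen
  rw [hnum] at hs
  rw [hden] at hs ⊢
  exact add_left_cancel (hs.trans t.num_sq_add_den_mul_prevDen.symm)

instance : Finite (ReducedSurd D) := by
  refine Finite.of_injective
    (β := Set.Icc (0 : ℤ) D.sqrt × Set.Icc (0 : ℤ) (D.sqrt + D.sqrt))
    (fun s ↦ (⟨s.num, s.num_pos.le, s.num_le_sqrt⟩,
      ⟨s.den, s.den_pos.le, by linarith [s.den_le_num_add_sqrt, s.num_le_sqrt]⟩)) ?_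
  intro s t h
  obtain ⟨hnum, hden⟩ := Prod.mk.inj h
  exact eq_of_num_eq_of_den_eq (Subtype.mk.inj hnum) (Subtype.mk.inj hden)

/-- The partial quotient `⌊α⌋`; the irrational `√D` may be replaced by its integer part because
`num` and `den` are integers (see `floor_completeQuotient`). -/
def quo : ℤ := (s.num + D.sqrt) / s.den

theorem quo_mul_den_le : s.quo * s.den ≤ s.num + D.sqrt :=
  Int.ediv_mul_le _ s.den_pos.ne'

theorem lt_quo_mul_den_add_den : s.num + D.sqrt < s.quo * s.den + s.den := by
  simpa only [quo, add_one_mul] using Int.lt_ediv_add_one_mul_self (s.num + D.sqrt) s.den_pos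

theorem quo_pos : 0 < s.quo :=
  (Int.le_ediv_iff_mul_le s.den_pos).mpr (by linarith [s.den_le_num_add_sqrt])

/-- The numerator of `1 / (α - ⌊α⌋)`. -/
def nextNum : ℤ := s.quo * s.den - s.num

/-- The denominator of `1 / (α - ⌊α⌋)`, in a division-free form of
`(D - nextNum²) / den`. -/
def nextDen : ℤ := s.prevDen + s.quo * (s.num - s.nextNum)

theorem nextNum_sq_add_nextDen_mul_den : s.nextNum ^ 2 + s.nextDen * s.den = D := by
  rw [← s.num_sq_add_den_mul_prevDen, nextDen, nextNum]
  ring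

theorem nextNum_le_sqrt : s.nextNum ≤ D.sqrt := by
  linarith [s.quo_mul_den_le, show s.nextNum = s.quo * s.den - s.num from rfl]

theorem sqrt_lt_nextNum_add_den : (D.sqrt : ℤ) < s.nextNum + s.den := by
  linarith [s.lt_quo_mul_den_add_den, show s.nextNum = s.quo * s.den - s.num from rfl]

theorem den_le_nextNum_add_sqrt : s.den ≤ s.nextNum + D.sqrt := by
  have hden : s.den ≤ s.quo * s.den := le_mul_of_one_le_left s.den_pos.le s.quo_pos
  linarith [s.num_le_sqrt, show s.nextNum = s.quo * s.den - s.num from rfl]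

theorem nextDen_pos [Zsqrtd.Nonsquare D] : 0 < s.nextDen := by
  refine pos_of_mul_pos_left ?_ s.den_pos.le
  have hsq : s.nextNum ^ 2 ≤ (D.sqrt : ℤ) ^ 2 :=
    sq_le_sq' (by linarith [s.den_le_nextNum_add_sqrt, s.den_pos]) s.nextNum_le_sqrt
  linarith [s.nextNum_sq_add_nextDen_mul_den, cast_nat_sqrt_sq_lt D]

theorem sqrt_lt_nextNum_add_nextDen [Zsqrtd.Nonsquare D] :
    (D.sqrt : ℤ) < s.nextNum + s.nextDen := by
  by_contra! hle
  have hprod : s.nextDen * s.den ≤ (D.sqrt - s.nextNum) * (s.nextNum + D.sqrt) :=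
    mul_le_mul (by linarith) s.den_le_nextNum_add_sqrt s.den_pos.le
      (by linarith [s.nextNum_le_sqrt])
  linarith [s.nextNum_sq_add_nextDen_mul_den, cast_nat_sqrt_sq_lt D,
    show (D.sqrt - s.nextNum) * (s.nextNum + D.sqrt) = (D.sqrt : ℤ) ^ 2 - s.nextNum ^ 2 by ring]

/-- Galois' involution `α ↦ -1 / α'`, where `α'` is the conjugate of `α`. -/
def dual : ReducedSurd D where
  num := s.num
  den := s.prevDen
  prevDen := s.den
  den_pos := s.prevDen_pos
  prevDen_pos := s.den_pos
  sqrt_lt_num_add_den := s.sqrt_lt_num_add_prevDen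
  sqrt_lt_num_add_prevDen := s.sqrt_lt_num_add_den
  num_sq_add_den_mul_prevDen := by rw [mul_comm, s.num_sq_add_den_mul_prevDen]

end Step

section Reflect

variable [Zsqrtd.Nonsquare D] (s : ReducedSurd D)

/-- The continued fraction step `α ↦ 1 / (α - ⌊α⌋)`. -/
def step : ReducedSurd D where
  num := s.nextNum
  den := s.nextDen
  prevDen := s.den
  den_pos := s.nextDen_pos
  prevDen_pos := s.den_pos
  sqrt_lt_num_add_den := s.sqrt_lt_nextNum_add_nextDen
  sqrt_lt_num_add_prevDen := s.sqrt_lt_nextNum_add_den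
  num_sq_add_den_mul_prevDen := s.nextNum_sq_add_nextDen_mul_den

/-- The involution `α ↦ ⌊α⌋ - α'`, where `α'` is the conjugate of `α`. -/
def reflect : ReducedSurd D := s.step.dual

theorem quo_reflect : s.reflect.quo = s.quo := by
  refine (Int.ediv_eq_iff_of_pos s.den_pos).mpr ?_
  change s.quo * s.den ≤ s.quo * s.den - s.num + D.sqrt ∧
    s.quo * s.den - s.num + D.sqrt < s.quo * s.den + s.den
  constructor <;> linarith [s.num_le_sqrt, s.sqrt_lt_num_add_den]

theorem reflect_involutive : Function.Involutive (reflect (D := D)) := by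
  refine fun s ↦ eq_of_num_eq_of_den_eq ?_ rfl
  change s.reflect.quo * s.den - (s.quo * s.den - s.num) = s.num
  rw [quo_reflect, sub_sub_cancel]

theorem step_reflect : s.reflect.step = s.dual :=
  congrArg dual (reflect_involutive s)

theorem step_reflect_step : s.step.reflect.step = s.reflect :=
  step_reflect s.step

theorem step_injective : Function.Injective (step (D := D)) := fun s t h ↦
  reflect_involutive.injective (congrArg dual (show s.step = t.step from h))

theorem reflect_eq_self_iff : s.reflect = s ↔ 2 * s.num = s.quo * s.den := by
  rw [two_mul, eq_comm (b := s.quo * s.den), ← sub_eq_iff_eq_add]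
  exact ⟨congrArg num, fun h ↦ eq_of_num_eq_of_den_eq h rfl⟩

end Reflect

section Cycle

variable (D) [Zsqrtd.Nonsquare D]

/-- The reduced surd `⌊√D⌋ + √D`. It has the same fractional part as `√D`, so that its continued
fraction is that of `√D` with `a₀` replaced by `2a₀`, and is purely periodic. -/
def principal : ReducedSurd D where
  num := D.sqrt
  den := 1
  prevDen := D - D.sqrt ^ 2
  den_pos := one_pos
  prevDen_pos := sub_pos.mpr (cast_nat_sqrt_sq_lt D)
  sqrt_lt_num_add_den := by linarith
  sqrt_lt_num_add_prevDen := by linarith [cast_nat_sqrt_sq_lt D]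
  num_sq_add_den_mul_prevDen := by ring

theorem quo_principal : (principal D).quo = 2 * D.sqrt := by
  rw [quo, two_mul]
  exact Int.ediv_one _

theorem reflect_principal : (principal D).reflect = principal D := by
  rw [reflect_eq_self_iff, quo_principal]
  exact (mul_one _).symm

/-- The reduced surd reached from `⌊√D⌋ + √D` after `k` continued fraction steps; for `1 ≤ k` it is
the `k`-th complete quotient of `√D`. -/
def cycle (k : ℕ) : ReducedSurd D := step^[k] (principal D)

/-- The number of reduced surds on the cycle of `⌊√D⌋ + √D`. -/
noncomputable def cycleLength : ℕ := Function.minimalPeriod step (principal D)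

theorem cycle_zero : cycle D 0 = principal D := rfl

theorem cycle_succ (k : ℕ) : cycle D (k + 1) = (cycle D k).step :=
  Function.iterate_succ_apply' _ _ _

theorem cycleLength_pos : 0 < cycleLength D :=
  Function.minimalPeriod_pos_of_mem_periodicPts (step_injective.mem_periodicPts _)

variable {D}

theorem eq_principal_of_den_eq_one {s : ReducedSurd D} (hden : s.den = 1) : s = principal D := by
  refine eq_of_num_eq_of_den_eq (le_antisymm s.num_le_sqrt ?_) hden
  have hlt := s.sqrt_lt_num_add_den
  rw [hden] at hlt
  exact Int.lt_add_one_iff.mp hlt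

theorem quo_eq_two_mul_sqrt_iff {s : ReducedSurd D} : s.quo = 2 * D.sqrt ↔ s = principal D := by
  refine ⟨fun h ↦ eq_principal_of_den_eq_one ?_, fun h ↦ h ▸ quo_principal D⟩
  have hle := s.quo_mul_den_le
  rw [h] at hle
  nlinarith [s.num_le_sqrt, s.num_pos, s.den_pos]

theorem cycle_add_of_dvd {l : ℕ} (h : cycleLength D ∣ l) (k : ℕ) :
    cycle D (k + l) = cycle D k := by
  rw [cycle, Function.iterate_add_apply, Function.isPeriodicPt_iff_minimalPeriod_dvd.mpr h, cycle]

theorem cycle_eq_principal_iff {k : ℕ} : cycle D k = principal D ↔ cycleLength D ∣ k :=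
  Function.isPeriodicPt_iff_minimalPeriod_dvd

theorem reflect_cycle_of_add_eq {k j : ℕ} (h : k + j = cycleLength D) :
    (cycle D k).reflect = cycle D j := by
  induction j generalizing k with
  | zero =>
    rw [cycle_eq_principal_iff.mpr (by rw [← h, add_zero]), reflect_principal]
    rfl
  | succ j ih =>
    rw [cycle_succ, ← ih (k := k + 1) (by omega), cycle_succ, step_reflect_step]

theorem quo_cycle_eq_two_mul_sqrt_iff {k : ℕ} :
    (cycle D k).quo = 2 * D.sqrt ↔ cycleLength D ∣ k :=
  quo_eq_two_mul_sqrt_iff.trans cycle_eq_principal_iff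

theorem two_mul_num_cycle_center {m : ℕ} (h : cycleLength D = 2 * m) :
    2 * (cycle D m).num = (cycle D m).quo * (cycle D m).den :=
  (reflect_eq_self_iff _).mp (reflect_cycle_of_add_eq (by rw [h, two_mul]))

theorem den_cycle_center_ne_one {m : ℕ} (h : cycleLength D = 2 * m) : (cycle D m).den ≠ 1 := by
  intro hden
  have hdvd := cycle_eq_principal_iff.mp (eq_principal_of_den_eq_one hden)
  have hpos := cycleLength_pos D
  have hle := Nat.le_of_dvd (by omega) hdvd
  omega

end Cycle

section CompleteQuotient

/-- The real number `α = (num + √D) / den`. -/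
noncomputable def completeQuotient (s : ReducedSurd D) : ℝ := (s.num + √D) / s.den

theorem floor_completeQuotient (s : ReducedSurd D) : ⌊s.completeQuotient⌋ = s.quo := by
  rw [completeQuotient, Int.floor_div_cast_of_nonneg s.den_pos.le, Int.floor_intCast_add,
    Real.floor_real_sqrt_eq_nat_sqrt, quo]

variable [Zsqrtd.Nonsquare D]

theorem completeQuotient_step (s : ReducedSurd D) :
    s.step.completeQuotient = 1 / (s.completeQuotient - s.quo) := by
  have den_ne : (s.den : ℝ) ≠ 0 := by exact_mod_cast s.den_pos.ne'
  have nextDen_ne : (s.nextDen : ℝ) ≠ 0 := by exact_mod_cast s.nextDen_pos.ne'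
  have norm_eq : (s.nextNum + √D) * (√D - s.nextNum) = s.den * s.nextDen := by
    have hnext : (s.nextNum : ℝ) ^ 2 + s.nextDen * s.den = D := by
      exact_mod_cast s.nextNum_sq_add_nextDen_mul_den
    linear_combination Real.sq_sqrt (Nat.cast_nonneg (α := ℝ) D) - hnext
  have sub_ne : √D - s.nextNum ≠ 0 :=
    right_ne_zero_of_mul (norm_eq ▸ mul_ne_zero den_ne nextDen_ne)
  have hfract : s.completeQuotient - s.quo = (√D - s.nextNum) / s.den := by
    rw [completeQuotient, nextNum, div_sub' den_ne]
    push_cast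
    ring
  rw [hfract, one_div_div]
  exact (div_eq_div_iff nextDen_ne sub_ne).mpr norm_eq

variable (D)

theorem completeQuotient_principal : (principal D).completeQuotient = D.sqrt + √D := by
  simp [completeQuotient, principal]

end CompleteQuotient

end ReducedSurd

open ReducedSurd

section Sqrt

variable {D : ℕ} [Zsqrtd.Nonsquare D]

theorem cfAlpha_sqrt_succ (k : ℕ) : cfAlpha √D (k + 1) = (cycle D (k + 1)).completeQuotient := by
  induction k with
  | zero =>
    rw [cycle_succ, completeQuotient_step, cycle_zero, completeQuotient_principal, quo_principal,
      cfAlpha, cfAlpha, Real.floor_real_sqrt_eq_nat_sqrt]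
    push_cast
    ring
  | succ k ih =>
    rw [cfAlpha, ih, floor_completeQuotient, cycle_succ D (k + 1), completeQuotient_step]

theorem cfA_sqrt {k : ℕ} (hk : 0 < k) : cfA √D k = (cycle D k).quo := by
  obtain ⟨k, rfl⟩ := Nat.exists_eq_add_of_le' hk
  rw [cfA, cfAlpha_sqrt_succ, floor_completeQuotient]

theorem forall_cfA_sqrt_add_eq_iff {l : ℕ} :
    (∀ k, 1 ≤ k → cfA √D (k + l) = cfA √D k) ↔ cycleLength D ∣ l := by
  constructor
  · intro h
    have hT := cycleLength_pos D
    have hlast := h (cycleLength D) hT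
    rw [cfA_sqrt hT, cfA_sqrt (by omega), quo_cycle_eq_two_mul_sqrt_iff.mpr dvd_rfl,
      quo_cycle_eq_two_mul_sqrt_iff] at hlast
    exact (Nat.dvd_add_right dvd_rfl).mp hlast
  · intro h k hk
    rw [cfA_sqrt (by omega), cfA_sqrt hk, cycle_add_of_dvd h]

variable (D)

theorem cfPeriod_sqrt : cfPeriod √D = cycleLength D := by
  simp only [cfPeriod, forall_cfA_sqrt_add_eq_iff]
  exact IsLeast.csInf_eq ⟨⟨cycleLength_pos D, dvd_rfl⟩, fun l hl ↦ Nat.le_of_dvd hl.1 hl.2⟩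

theorem cfPeriod_sqrt_pos : 0 < cfPeriod √D :=
  cfPeriod_sqrt D ▸ cycleLength_pos D

variable {D}

theorem cfA_sqrt_eq_two_mul_sqrt_iff {k : ℕ} (hk : 0 < k) :
    cfA √D k = 2 * D.sqrt ↔ cfPeriod √D ∣ k := by
  rw [cfA_sqrt hk, quo_cycle_eq_two_mul_sqrt_iff, cfPeriod_sqrt]

theorem cfA_sqrt_cfPeriod_sub {k : ℕ} (hk : 0 < k) (hlt : k < cfPeriod √D) :
    cfA √D (cfPeriod √D - k) = cfA √D k := by
  rw [cfA_sqrt hk, cfA_sqrt (Nat.sub_pos_of_lt hlt), ← quo_reflect (cycle D k),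
    reflect_cycle_of_add_eq ((Nat.add_sub_of_le hlt.le).trans (cfPeriod_sqrt D))]

theorem odd_card_cfA_sqrt_eq_iff (a : ℤ) :
    Odd #{k ∈ Icc 1 (cfPeriod √D) | cfA √D k = a} ↔
      2 * D.sqrt = a ∨ Even (cfPeriod √D) ∧ cfA √D (cfPeriod √D / 2) = a := by
  have hT := cfPeriod_sqrt_pos D
  rw [odd_card_filter_Icc_iff_of_symm hT
      fun k hk hlt h ↦ (cfA_sqrt_cfPeriod_sub hk hlt).trans h,
    (cfA_sqrt_eq_two_mul_sqrt_iff hT).mpr dvd_rfl, xor_iff_or_and_not_and, and_iff_left_iff_imp]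
  rintro - ⟨rfl, ⟨m, hm⟩, hcenter⟩
  rw [cfA_sqrt_eq_two_mul_sqrt_iff (by omega)] at hcenter
  have hle := Nat.le_of_dvd (by omega) hcenter
  omega

end Sqrt

section TwoMulPrime

variable {p : ℕ}

theorem nonsquare_two_mul_of_odd (hodd : Odd p) : Zsqrtd.Nonsquare (2 * p) := by
  refine ⟨fun n hn ↦ ?_⟩
  obtain ⟨m, rfl⟩ : Even n := by
    rw [← Nat.even_pow' two_ne_zero, sq, ← hn]
    exact even_two_mul p
  have hp_even : Even p := even_iff_exists_two_mul.mpr ⟨m * m, by linarith⟩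
  exact Nat.not_even_iff_odd.mpr hodd hp_even

namespace ReducedSurd

theorem isCoprime_den_of_dvd_two_mul_num (hp : p.Prime) (hodd : Odd p)
    {s : ReducedSurd (2 * p)} (hdvd : s.den ∣ 2 * s.num) : IsCoprime s.den (p : ℤ) := by
  have hprime : Prime (p : ℤ) := Nat.prime_iff_prime_int.mp hp
  refine (hprime.irreducible.coprime_iff_not_dvd.mpr fun hden ↦ ?_).symm
  have hnum : (p : ℤ) ∣ s.num := (hprime.dvd_or_dvd (hden.trans hdvd)).resolve_left fun h2 ↦ by
    have hp_eq_two := (Nat.prime_dvd_prime_iff_eq hp Nat.prime_two).mp (by exact_mod_cast h2)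
    simp [hp_eq_two, Nat.odd_iff] at hodd
  have hle : (p : ℤ) ≤ s.num := Int.le_of_dvd s.num_pos hnum
  have hlt : s.num ^ 2 < 2 * p := by exact_mod_cast s.num_sq_lt
  have hp2 : (2 : ℤ) ≤ p := by exact_mod_cast hp.two_le
  nlinarith

theorem den_eq_two_of_dvd_two_mul_num (hp : p.Prime) (hodd : Odd p)
    {s : ReducedSurd (2 * p)} (hdvd : s.den ∣ 2 * s.num) (hne : s.den ≠ 1) : s.den = 2 := by
  have heqn : s.num ^ 2 + s.den * s.prevDen = 2 * p := by
    exact_mod_cast s.num_sq_add_den_mul_prevDen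
  have hdvd_four : s.den ∣ 4 := by
    refine (isCoprime_den_of_dvd_two_mul_num hp hodd hdvd).dvd_of_dvd_mul_right ?_
    rw [show (4 : ℤ) * p = 2 * s.num * s.num + s.den * (2 * s.prevDen) by linarith]
    exact (hdvd.mul_right _).add (dvd_mul_right _ _)
  have hne_four : s.den ≠ 4 := by
    intro h
    obtain ⟨m, hm⟩ : Even s.num := by
      rw [h] at hdvd
      obtain ⟨m, hm⟩ := hdvd
      exact ⟨m, by linarith⟩
    obtain ⟨t, rfl⟩ := hodd
    rw [h, hm] at heqn
    push_cast at heqn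
    grind
  have hle : s.den ≤ 4 := Int.le_of_dvd (by norm_num) hdvd_four
  have hpos := s.den_pos
  interval_cases s.den <;> omega

end ReducedSurd

theorem cfA_sqrt_two_mul_center_eq_iff (hp : p.Prime) (hodd : Odd p)
    (heven : Even (cfPeriod √(2 * p : ℕ))) {a : ℕ} :
    cfA √(2 * p : ℕ) (cfPeriod √(2 * p : ℕ) / 2) = a ↔
      Even a ∧ a ^ 2 < 2 * p ∧ 2 * p < (a + 2) ^ 2 := by
  have := nonsquare_two_mul_of_odd hodd
  obtain ⟨m, hm⟩ := even_iff_exists_two_mul.mp heven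
  have hm0 : 0 < m := by linarith [cfPeriod_sqrt_pos (2 * p)]
  have hT : cycleLength (2 * p) = 2 * m := (cfPeriod_sqrt _).symm.trans hm
  rw [hm, Nat.mul_div_cancel_left m two_pos, cfA_sqrt hm0]
  have hsymm := two_mul_num_cycle_center hT
  have hden_ne := den_cycle_center_ne_one hT
  generalize cycle (2 * p) m = s at *
  have hden := den_eq_two_of_dvd_two_mul_num hp hodd ⟨s.quo, by rw [hsymm, mul_comm]⟩ hden_ne
  have hquo : s.quo = s.num := by
    rw [hden] at hsymm
    linarith
  have hnum_even : Even s.num := by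
    have heqn := s.num_sq_add_den_mul_prevDen
    rw [hden] at heqn
    exact (Int.even_pow' two_ne_zero).mp ⟨p - s.prevDen, by push_cast at heqn; linarith⟩
  rw [hquo, eq_iff_even_and_sq_lt_and_lt_add_two_sq (by positivity) s.num_pos.le hnum_even
    s.num_sq_lt (hden ▸ s.lt_num_add_den_sq)]
  norm_cast

end TwoMulPrime

theorem stmt_1 (a p : ℕ) (ha : 0 < a) (hp : p.Prime) (hodd : Odd p) :
    Odd ((Finset.Icc 1 (cfPeriod (Real.sqrt (2 * p)))).filter
        (fun k => cfA (Real.sqrt (2 * p)) k = (a : ℤ))).card ↔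
      (Even a ∧
        ((a ^ 2 < 8 * p ∧ 8 * p < (a + 2) ^ 2) ∨
          (a ^ 2 < 2 * p ∧ 2 * p < (a + 2) ^ 2 ∧
            Even (cfPeriod (Real.sqrt (2 * p)))))) := by
  have := nonsquare_two_mul_of_odd hodd
  have hcast : (2 * p : ℝ) = (2 * p : ℕ) := by push_cast; rfl
  have hlast : (2 * (2 * p).sqrt : ℤ) = a ↔ Even a ∧ a ^ 2 < 8 * p ∧ 8 * p < (a + 2) ^ 2 := by
    rw [show 8 * p = 4 * (2 * p) by ring, ← two_mul_nat_sqrt_eq_iff]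
    norm_cast
  rw [hcast, odd_card_cfA_sqrt_eq_iff, hlast,
    and_congr_right fun heven : Even (cfPeriod _) ↦
      cfA_sqrt_two_mul_center_eq_iff hp hodd heven]
  tauto
end

section
/- Let D be a positive integer that is not a perfect square. If T_D = 2L for some positive integer L, Q_L is even, and Q_L is not divisible by 4, then a_L ≡ D (mod 2). -/
/-- The integer sequences `(Pₖ, Qₖ)` attached to the continued fraction of `√D`:
`P₀ = 0`, `Q₀ = 1`, `P_{k+1} = aₖ·Qₖ − Pₖ`, `Q_{k+1} = (D − P_{k+1}²)/Qₖ`. -/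
noncomputable def cfPQ (D : ℕ) : ℕ → ℤ × ℤ
  | 0 => (0, 1)
  | k + 1 =>
    ((cfA (Real.sqrt D) k) * (cfPQ D k).2 - (cfPQ D k).1,
      ((D : ℤ) - ((cfA (Real.sqrt D) k) * (cfPQ D k).2 - (cfPQ D k).1) ^ 2) / (cfPQ D k).2)

/-!
Besides the complete quotients `αₖ = (√D + Pₖ) / Qₖ`, consider the backward complete quotients
`βₖ = (√D + Pₖ₊₁) / Qₖ`. They exceed `1` and satisfy `βₖ₊₁ = aₖ₊₁ + 1 / βₖ`, so the continued
fraction algorithm started at `βₙ` runs through `βₙ, βₙ₋₁, …, β₀`. If `n` is a period, then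
`βₙ = β₀ = √D + a₀`, and the algorithm started there also runs through `α₁, α₂, …`; hence
`βₙ₋ₖ = αₖ` for `0 < k ≤ n`. For `n = 2L` the two meet in the middle: `β_L = α_L`, that is
`P_{L+1} = P_L`, so `2 P_L = a_L Q_L`. If `Q_L = 2q` with `q` odd, then `P_L = a_L q`, and
`Q_L ∣ D - P_L²` yields `D ≡ P_L² ≡ a_L (mod 2)`.
-/

section ContinuedFraction

variable {x y : ℝ} {k l : ℕ}

theorem cfAlpha_succ (x : ℝ) (k : ℕ) : cfAlpha x (k + 1) = (Int.fract (cfAlpha x k))⁻¹ :=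
  one_div _

theorem cfAlpha_add (x : ℝ) (m k : ℕ) : cfAlpha x (m + k) = cfAlpha (cfAlpha x m) k := by
  induction k with
  | zero => rfl
  | succ k ih => rw [← add_assoc, cfAlpha_succ, cfAlpha_succ, ih]

theorem cfAlpha_succ' (x : ℝ) (k : ℕ) : cfAlpha x (k + 1) = cfAlpha (Int.fract x)⁻¹ k := by
  rw [add_comm, cfAlpha_add]
  exact congrArg (cfAlpha · k) (cfAlpha_succ x 0)

theorem cfAlpha_add_intCast_succ (x : ℝ) (m : ℤ) (k : ℕ) :
    cfAlpha (x + m) (k + 1) = cfAlpha x (k + 1) := by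
  rw [cfAlpha_succ', cfAlpha_succ', Int.fract_add_intCast]

theorem cfA_cfAlpha (x : ℝ) (m k : ℕ) : cfA (cfAlpha x m) k = cfA x (m + k) :=
  congrArg Int.floor (cfAlpha_add x m k).symm

theorem convergent_eq_of_cfA_eq (h : cfA x = cfA y) (n : ℕ) : x.convergent n = y.convergent n := by
  have hfloor : ⌊x⌋ = ⌊y⌋ := congrFun h 0
  induction n generalizing x y with
  | zero => rw [Real.convergent_zero, Real.convergent_zero, hfloor]
  | succ n ih =>
    have htail : cfA (Int.fract x)⁻¹ = cfA (Int.fract y)⁻¹ := by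
      funext k
      simpa only [cfA, cfAlpha_succ'] using congrFun h (k + 1)
    rw [Real.convergent_succ, Real.convergent_succ, hfloor, ih htail (congrFun htail 0)]

theorem cfA_injective : Function.Injective cfA := by
  intro x y h
  have hconvs : (GenContFract.of x).convs = (GenContFract.of y).convs := by
    funext n
    rw [Real.convs_eq_convergent, Real.convs_eq_convergent, convergent_eq_of_cfA_eq h]
  exact tendsto_nhds_unique (GenContFract.of_convergence x)
    (hconvs ▸ GenContFract.of_convergence y)

theorem cfAlpha_add_one_of_period (h : ∀ k, 1 ≤ k → cfA x (k + l) = cfA x k) :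
    cfAlpha x (l + 1) = cfAlpha x 1 := by
  apply cfA_injective
  funext k
  rw [cfA_cfAlpha, cfA_cfAlpha, ← h (1 + k) (Nat.le_add_right 1 k)]
  congr 1
  ring

theorem cfA_add_cfPeriod (hx : 0 < cfPeriod x) (hk : 1 ≤ k) :
    cfA x (k + cfPeriod x) = cfA x k :=
  (Nat.sInf_mem (Nat.nonempty_of_pos_sInf hx)).2 k hk

theorem irrational_cfAlpha (hx : Irrational x) (k : ℕ) : Irrational (cfAlpha x k) := by
  induction k with
  | zero => exact hx
  | succ k ih => exact cfAlpha_succ x k ▸ (ih.sub_intCast _).inv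

theorem one_lt_cfAlpha_succ (hx : Irrational x) (k : ℕ) : 1 < cfAlpha x (k + 1) := by
  have hfract : Int.fract (cfAlpha x k) ≠ 0 := ((irrational_cfAlpha hx k).sub_intCast _).ne_zero
  rw [cfAlpha_succ, one_lt_inv₀ ((Int.fract_nonneg _).lt_of_ne' hfract)]
  exact Int.fract_lt_one _

theorem one_le_cfA_succ (hx : Irrational x) (k : ℕ) : 1 ≤ cfA x (k + 1) :=
  Int.le_floor.2 <| by exact_mod_cast (one_lt_cfAlpha_succ hx k).le

end ContinuedFraction

theorem add_intCast_div_inj_of_irrational {s : ℝ} (hs : Irrational s) {p q p' q' : ℤ}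
    (hq : q ≠ 0) (hq' : q' ≠ 0) :
    (s + p) / q = (s + p') / q' ↔ p = p' ∧ q = q' := by
  refine ⟨fun h ↦ ?_, fun ⟨hp, hq⟩ ↦ by rw [hp, hq]⟩
  have hcross : s * (q' - q : ℤ) = (p' * q - p * q' : ℤ) := by
    rw [div_eq_div_iff (by exact_mod_cast hq) (by exact_mod_cast hq')] at h
    push_cast
    linear_combination h
  obtain rfl : q = q' := by
    by_contra hne
    exact (hs.mul_intCast (sub_ne_zero.2 (Ne.symm hne))).ne_int _ hcross
  refine ⟨?_, rfl⟩
  have hpq : p' * q - p * q = 0 := by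
    rw [sub_self, Int.cast_zero, mul_zero] at hcross
    exact_mod_cast hcross.symm
  exact mul_right_cancel₀ hq (sub_eq_zero.1 hpq).symm

/-- The integers `Pₖ` in the numerators of the complete quotients `αₖ = (√D + Pₖ) / Qₖ` of `√D`. -/
noncomputable def cfP (D k : ℕ) : ℤ := (cfPQ D k).1

/-- The denominators `Qₖ` of the complete quotients `αₖ = (√D + Pₖ) / Qₖ` of `√D`. -/
noncomputable def cfQ (D k : ℕ) : ℤ := (cfPQ D k).2

/-- The backward complete quotient `βₖ = (√D + Pₖ₊₁) / Qₖ` of `√D`: the negative inverse of the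
algebraic conjugate of `αₖ₊₁`, used to run the continued fraction algorithm in reverse. -/
noncomputable def cfBeta (D k : ℕ) : ℝ := (√D + cfP D (k + 1)) / cfQ D k

theorem dvd_sub_mul_sub_sq {R : Type*} [CommRing R] {d p q : R} (h : q ∣ d - p ^ 2) (a : R) :
    q ∣ d - (a * q - p) ^ 2 := by
  have hsub : d - (a * q - p) ^ 2 = d - p ^ 2 + q * (2 * a * p - a ^ 2 * q) := by ring
  exact hsub ▸ h.add (dvd_mul_right _ _)

section PQ

variable (D k : ℕ)

theorem cfP_succ : cfP D (k + 1) = cfA √D k * cfQ D k - cfP D k := rfl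

theorem cfQ_succ : cfQ D (k + 1) = (D - cfP D (k + 1) ^ 2) / cfQ D k := rfl

theorem cfQ_dvd_sub_sq : cfQ D k ∣ D - cfP D k ^ 2 := by
  induction k with
  | zero => exact one_dvd _
  | succ k ih =>
    have hdvd : cfQ D k ∣ D - cfP D (k + 1) ^ 2 := dvd_sub_mul_sub_sq ih _
    exact cfQ_succ D k ▸ Int.ediv_dvd_of_dvd hdvd

theorem cfQ_mul_cfQ_succ : cfQ D k * cfQ D (k + 1) = D - cfP D (k + 1) ^ 2 := by
  have hdvd : cfQ D k ∣ D - cfP D (k + 1) ^ 2 := dvd_sub_mul_sub_sq (cfQ_dvd_sub_sq D k) _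
  rw [cfQ_succ, Int.mul_ediv_cancel' hdvd]

theorem sqrt_add_mul_sqrt_sub :
    (√D + cfP D (k + 1)) * (√D - cfP D (k + 1)) = cfQ D k * cfQ D (k + 1) := by
  rw [← sq_sub_sq, Real.sq_sqrt (Nat.cast_nonneg D)]
  exact_mod_cast (cfQ_mul_cfQ_succ D k).symm

theorem cfBeta_zero : cfBeta D 0 = √D + ⌊√D⌋ := by
  simp [cfBeta, cfP, cfQ, cfPQ, cfA, cfAlpha]

end PQ

section Nonsquare

variable {D : ℕ} (hns : ¬ IsSquare D)
include hns

theorem cfQ_ne_zero (k : ℕ) : cfQ D k ≠ 0 := by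
  cases k with
  | zero => exact one_ne_zero
  | succ k =>
    intro h
    have hsq : (D : ℤ) = cfP D (k + 1) ^ 2 := by
      rw [← sub_eq_zero, ← cfQ_mul_cfQ_succ, h, mul_zero]
    exact hns (Int.isSquare_natCast_iff.1 (hsq ▸ IsSquare.sq _))

theorem irrational_sqrt_of_not_isSquare : Irrational √D :=
  irrational_sqrt_natCast_iff.2 hns

theorem cfAlpha_sqrt (k : ℕ) : cfAlpha √D k = (√D + cfP D k) / cfQ D k := by
  induction k with
  | zero => simp [cfAlpha, cfP, cfQ, cfPQ]
  | succ k ih =>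
    have hQ : (cfQ D k : ℝ) ≠ 0 := by exact_mod_cast cfQ_ne_zero hns k
    have hQ' : (cfQ D (k + 1) : ℝ) ≠ 0 := by exact_mod_cast cfQ_ne_zero hns (k + 1)
    have hfract : Int.fract (cfAlpha √D k) = (√D - cfP D (k + 1)) / cfQ D k := by
      rw [Int.fract, ← cfA, eq_div_iff hQ, sub_mul, ih, div_mul_cancel₀ _ hQ, cfP_succ]
      push_cast
      ring
    have hne : √D - cfP D (k + 1) ≠ 0 :=
      ((irrational_sqrt_of_not_isSquare hns).sub_intCast _).ne_zero
    rw [cfAlpha_succ, hfract, inv_div, div_eq_div_iff hne hQ', sqrt_add_mul_sqrt_sub]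

theorem cfP_eq_and_cfQ_eq_of_cfAlpha_eq {m n : ℕ} (h : cfAlpha √D m = cfAlpha √D n) :
    cfP D m = cfP D n ∧ cfQ D m = cfQ D n := by
  rw [cfAlpha_sqrt hns, cfAlpha_sqrt hns] at h
  exact (add_intCast_div_inj_of_irrational (irrational_sqrt_of_not_isSquare hns)
    (cfQ_ne_zero hns m) (cfQ_ne_zero hns n)).1 h

theorem cfBeta_succ (k : ℕ) : cfBeta D (k + 1) = cfA √D (k + 1) + (cfBeta D k)⁻¹ := by
  have hQ : (cfQ D (k + 1) : ℝ) ≠ 0 := by exact_mod_cast cfQ_ne_zero hns (k + 1)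
  have hne : √D + cfP D (k + 1) ≠ 0 :=
    ((irrational_sqrt_of_not_isSquare hns).add_intCast _).ne_zero
  have hinv : (cfBeta D k)⁻¹ = (√D - cfP D (k + 1)) / cfQ D (k + 1) := by
    rw [cfBeta, inv_div, div_eq_div_iff hne hQ, mul_comm (_ - _), sqrt_add_mul_sqrt_sub]
  rw [hinv, cfBeta, cfP_succ D (k + 1), div_eq_iff hQ, add_mul, div_mul_cancel₀ _ hQ]
  push_cast
  ring

theorem one_lt_cfBeta (k : ℕ) : 1 < cfBeta D k := by
  induction k with
  | zero =>
    have hD : 1 ≤ D := Nat.one_le_iff_ne_zero.2 fun h ↦ hns (h ▸ IsSquare.zero)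
    have hsqrt : 1 ≤ √D := Real.one_le_sqrt.2 (by exact_mod_cast hD)
    have hfloor : (1 : ℝ) ≤ ⌊√D⌋ := by exact_mod_cast Int.le_floor.2 (by exact_mod_cast hsqrt)
    rw [cfBeta_zero]
    linarith
  | succ k ih =>
    have hA : (1 : ℝ) ≤ cfA √D (k + 1) := by
      exact_mod_cast one_le_cfA_succ (irrational_sqrt_of_not_isSquare hns) k
    have hinv : 0 < (cfBeta D k)⁻¹ := inv_pos.2 (one_pos.trans ih)
    rw [cfBeta_succ hns]
    linarith

theorem fract_cfBeta_succ (k : ℕ) : Int.fract (cfBeta D (k + 1)) = (cfBeta D k)⁻¹ := by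
  have hlt := one_lt_cfBeta hns k
  rw [cfBeta_succ hns, Int.fract_intCast_add, Int.fract_eq_self]
  exact ⟨inv_nonneg.2 (one_pos.trans hlt).le, inv_lt_one_of_one_lt₀ hlt⟩

theorem cfAlpha_cfBeta_add (j k : ℕ) : cfAlpha (cfBeta D (j + k)) k = cfBeta D j := by
  induction k with
  | zero => rfl
  | succ k ih => rw [← add_assoc, cfAlpha_succ', fract_cfBeta_succ hns, inv_inv, ih]

theorem cfBeta_eq_cfBeta_zero_of_period {n : ℕ}
    (hper : ∀ k, 1 ≤ k → cfA √D (k + n) = cfA √D k) : cfBeta D n = cfBeta D 0 := by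
  obtain ⟨hP, hQ⟩ := cfP_eq_and_cfQ_eq_of_cfAlpha_eq hns (cfAlpha_add_one_of_period hper)
  have hQn : cfQ D n = cfQ D 0 := by
    refine mul_right_cancel₀ (cfQ_ne_zero hns 1) ?_
    rw [← hQ, cfQ_mul_cfQ_succ, hP, hQ, ← cfQ_mul_cfQ_succ]
  rw [cfBeta, cfBeta, hP, hQn]

theorem cfBeta_eq_cfAlpha_of_period {j k : ℕ} (hk : 0 < k)
    (hper : ∀ i, 1 ≤ i → cfA √D (i + (j + k)) = cfA √D i) : cfBeta D j = cfAlpha √D k := by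
  obtain ⟨k, rfl⟩ := Nat.exists_eq_add_one.2 hk
  rw [← cfAlpha_cfBeta_add hns j (k + 1), cfBeta_eq_cfBeta_zero_of_period hns hper,
    cfBeta_zero, cfAlpha_add_intCast_succ]

theorem cfP_succ_eq_of_period {L : ℕ} (hL : 0 < L)
    (hper : ∀ k, 1 ≤ k → cfA √D (k + 2 * L) = cfA √D k) : cfP D (L + 1) = cfP D L := by
  have hmid : cfBeta D L = cfAlpha √D L :=
    cfBeta_eq_cfAlpha_of_period hns hL (two_mul L ▸ hper)
  rw [cfBeta, cfAlpha_sqrt hns] at hmid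
  exact ((add_intCast_div_inj_of_irrational (irrational_sqrt_of_not_isSquare hns)
    (cfQ_ne_zero hns L) (cfQ_ne_zero hns L)).1 hmid).1

end Nonsquare

theorem cfA_modEq_two_of_cfP_succ_eq {D k : ℕ} (hP : cfP D (k + 1) = cfP D k)
    (h2 : 2 ∣ cfQ D k) (h4 : ¬ 4 ∣ cfQ D k) : cfA √D k ≡ D [ZMOD 2] := by
  have hdvd : 2 ∣ D - cfP D k ^ 2 := h2.trans (cfQ_dvd_sub_sq D k)
  obtain ⟨q, hq⟩ := h2
  have hq_one : q ≡ 1 [ZMOD 2] := by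
    rw [Int.ModEq]
    omega
  have hPq : cfP D k = cfA √D k * q := by
    rw [cfP_succ, hq] at hP
    linarith
  calc cfA √D k
    _ ≡ cfA √D k ^ 2 [ZMOD 2] := by
        rw [Int.modEq_iff_dvd, ← even_iff_two_dvd, sq, ← mul_sub_one]
        exact Int.even_mul_pred_self _
    _ = (cfA √D k * 1) ^ 2 := by rw [mul_one]
    _ ≡ (cfA √D k * q) ^ 2 [ZMOD 2] := (hq_one.symm.mul_left _).pow 2
    _ = cfP D k ^ 2 := by rw [hPq]
    _ ≡ D [ZMOD 2] := Int.modEq_iff_dvd.2 hdvd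

theorem stmt_5_general {D L : ℕ} (hns : ¬ IsSquare D) (hL : 0 < L)
    (hper : ∀ k, 1 ≤ k → cfA √D (k + 2 * L) = cfA √D k)
    (h2 : 2 ∣ (cfPQ D L).2) (h4 : ¬ 4 ∣ (cfPQ D L).2) : cfA √D L ≡ D [ZMOD 2] :=
  cfA_modEq_two_of_cfP_succ_eq (cfP_succ_eq_of_period hns hL hper) h2 h4

theorem stmt_5 (D : ℕ) (hD : 0 < D) (hns : ¬ IsSquare D) (L : ℕ) (hL : 0 < L)
    (hT : cfPeriod (Real.sqrt D) = 2 * L)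
    (h2 : 2 ∣ (cfPQ D L).2) (h4 : ¬ (4 ∣ (cfPQ D L).2)) :
    cfA (Real.sqrt D) L ≡ (D : ℤ) [ZMOD 2] :=
  stmt_5_general hns hL (fun _ hk ↦ hT ▸ cfA_add_cfPeriod (hT ▸ by positivity) hk) h2 h4
end
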